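/- For every ν > 0, γ > 0, every pair α ≥ α' with α' > 1, and all D > 0, B > 0, there exist K₀ ∈ ℕ and a constant D̄ ≥ 2D such that the following holds. Let t > 0 and let ω_k, z_k : [0, t] → ℂ (k ∈ ℤ²_*) be continuous functions satisfying: (i) |k|^γ |z_k(s)| ≤ D for all k ∈ ℤ²_* and s ∈ [0, t]; (ii) ∑_{k ∈ ℤ²_*} |ω_k(s)|² ≤ B² for all s ∈ [0, t]; (iii) for each k ∈ ℤ²_* the difference ρ_k := ω_k − z_k is differentiable on [0, t] with ρ_k(0) = 0 and ρ_k'(s) = −ν |k|^α ρ_k(s) + F_k(ω(s)) for all s ∈ [0, t], where the series defining F_k(ω(s)) converges absolutely. Then for every k ∈ ℤ²_* with |k| > K₀, sup_{s ∈ [0, t]} |ρ_k(s)| ≤ 2 D̄ / |k|^{γ + (α − α')}; consequently |k|^γ |ω_k(s)| ≤ 3 D̄ for all such k and all s ∈ [0, t]. -/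

import Mathlib

/-!
The proof rests on the linearity in the decay constant of an estimate of `F`: if
`|ω_k| ≤ M |k|^{-p}` for all `k` and `‖ω‖_{ℓ²} ≤ B`, then `|F_k(ω)| ≤ C M |k|^{1+η-p}` for
`0 < η ≤ p`, with `C` depending only on `p`, `η`, `B` (`norm_Fns_le_decay`). Dividing by the
dissipation `ν |k|^α` (`duhamel_bound`) bounds `ρ_k` by `(C / ν) M |k|^{1+η-p-α}`.

With `2η ≤ α' - 1` this is used in two ways. First, qualitatively: the energy alone gives
`|F_k| ≤ 2 B² |k|`, hence decay of exponent `η` for `ω`, and every application of the estimate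
improves the exponent by `η` until the exponent `γ` of `z` is reached. Thus
`M = sup_{k,s} |k|^γ |ω_k(s)|` is finite. Second, quantitatively, with `p = γ`: for `|k| > K₀` the
factor `(C / ν) |k|^{-η}` is at most `1/4`, so `|k|^γ |ω_k| ≤ D + M / 4`, whereas for `|k| ≤ K₀`
the energy gives `|k|^γ |ω_k| ≤ K₀^γ B`. As `M < ∞`, it follows that
`M ≤ max (2 D) (K₀^γ B) =: D̄`, and the claim for `ρ_k` is the same estimate once more. The a priori
finiteness of `M` replaces a first-exit-time argument, which would need uniformity over the
infinitely many modes.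
-/

open scoped Classical

/-- `ℤ²_* = ℤ² ∖ {0}`. -/
abbrev Zstar : Type := {k : ℤ × ℤ // k ≠ 0}

/-- Euclidean norm of a lattice point. -/
noncomputable def znorm (a : ℤ × ℤ) : ℝ := Real.sqrt ((a.1 : ℝ) ^ 2 + (a.2 : ℝ) ^ 2)

/-- `a^⊥ = (−a₂, a₁)`. -/
def zperp (a : ℤ × ℤ) : ℤ × ℤ := (-a.2, a.1)

/-- Dot product of lattice points. -/
def zdot (a b : ℤ × ℤ) : ℤ := a.1 * b.1 + a.2 * b.2

/-- Extension of a function on `ℤ²_*` to `ℤ²` by zero. -/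
noncomputable def zext (ω : Zstar → ℂ) : ℤ × ℤ → ℂ :=
  fun k => if h : k ≠ 0 then ω ⟨k, h⟩ else 0

/-- The `ℓ`-th term of the series defining the Navier–Stokes nonlinearity `F_k(ω)`. -/
noncomputable def Fterm (ω : Zstar → ℂ) (k : Zstar) (ℓ : ℤ × ℤ) : ℂ :=
  (((zdot (zperp ℓ) k.1 : ℝ) / (znorm ℓ) ^ 2 : ℝ) : ℂ) * zext ω ℓ * zext ω (k.1 - ℓ)

/-- The Navier–Stokes nonlinearity `F_k(ω) = 2i ∑_{j+ℓ=k} ((ℓ^⊥·k)/|ℓ|²) ω_ℓ ω_j`. -/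
noncomputable def Fns (ω : Zstar → ℂ) (k : Zstar) : ℂ :=
  2 * Complex.I * ∑' ℓ : ℤ × ℤ, Fterm ω k ℓ

/-! ### The lattice norm -/

lemma znorm_eq (a : ℤ × ℤ) : znorm a = ‖(⟨(a.1 : ℝ), (a.2 : ℝ)⟩ : ℂ)‖ := by
  rw [Complex.norm_def, Complex.normSq_mk, znorm]
  congr 1; ring

lemma znorm_nonneg (a : ℤ × ℤ) : 0 ≤ znorm a := Real.sqrt_nonneg _

lemma znorm_triangle (a b : ℤ × ℤ) : znorm a ≤ znorm b + znorm (a - b) := by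
  rw [znorm_eq, znorm_eq, znorm_eq]
  refine le_trans (le_of_eq ?_) (norm_add_le _ _)
  congr 1
  apply Complex.ext <;> simp

lemma one_le_znorm {a : ℤ × ℤ} (h : a ≠ 0) : 1 ≤ znorm a := by
  rw [znorm, Real.one_le_sqrt]
  have h2 : (1 : ℤ) ≤ a.1 ^ 2 + a.2 ^ 2 := by
    by_contra hc
    have h0 : a.1 ^ 2 + a.2 ^ 2 = 0 := by
      have := sq_nonneg a.1
      have := sq_nonneg a.2
      omega
    have h1 : a.1 = 0 := by nlinarith [sq_nonneg a.1, sq_nonneg a.2]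
    have h3 : a.2 = 0 := by nlinarith [sq_nonneg a.1, sq_nonneg a.2]
    exact h (Prod.ext h1 h3)
  exact_mod_cast h2

/-- Cauchy–Schwarz for the convection symbol. -/
lemma abs_zdot_zperp_le (a b : ℤ × ℤ) : |(zdot (zperp a) b : ℝ)| ≤ znorm a * znorm b := by
  rw [znorm, znorm, ← Real.sqrt_mul (by positivity)]
  apply Real.abs_le_sqrt
  simp only [zdot, zperp]
  push_cast
  nlinarith [sq_nonneg ((a.1 : ℝ) * b.1 + a.2 * b.2)]

/-- `∑ |ℓ|^{-2-2η}` converges on `ℤ²`; the term at `ℓ = 0` is `0` by the convention `0 ^ x = 0`. -/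
lemma summable_znorm {η : ℝ} (hη : 0 < η) :
    Summable fun ℓ : ℤ × ℤ => (znorm ℓ ^ (-1 - η)) ^ 2 := by
  have h := EisensteinSeries.summable_one_div_norm_rpow (k := 2 + 2 * η) (by linarith)
  rw [← (finTwoArrowEquiv ℤ).symm.summable_iff] at h
  refine Summable.of_nonneg_of_le (fun ℓ => by positivity) (fun ℓ => ?_) h
  rw [← Real.rpow_natCast, ← Real.rpow_mul (znorm_nonneg _)]
  have he : (-1 - η) * ((2 : ℕ) : ℝ) = -(2 + 2 * η) := by push_cast; ring
  rw [he]
  rcases eq_or_ne ℓ 0 with rfl | hℓ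
  · have h0 : znorm 0 = 0 := by simp [znorm]
    rw [h0, Real.zero_rpow (by linarith)]
    simp only [Function.comp]
    positivity
  · have hx : ((finTwoArrowEquiv ℤ).symm ℓ) ≠ 0 := by
      intro h0
      apply hℓ
      have h1 := congrFun h0 0
      have h2 := congrFun h0 1
      simp at h1 h2
      exact Prod.ext h1 h2
    simp only [Function.comp]
    apply Real.rpow_le_rpow_of_nonpos (norm_pos_iff.2 hx) _ (by linarith)
    rw [pi_norm_le_iff_of_nonneg (znorm_nonneg _)]
    intro i
    fin_cases i
    · simp only [finTwoArrowEquiv_symm_apply, Int.norm_eq_abs, znorm]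
      apply Real.abs_le_sqrt
      simp
      positivity
    · simp only [finTwoArrowEquiv_symm_apply, Int.norm_eq_abs, znorm]
      apply Real.abs_le_sqrt
      simp
      positivity

/-! ### Estimates of the nonlinearity -/

lemma hasSum_zext_sq {ω : Zstar → ℂ} (hs : Summable fun k => ‖ω k‖ ^ 2) :
    HasSum (fun ℓ => ‖zext ω ℓ‖ ^ 2) (∑' k, ‖ω k‖ ^ 2) := by
  have hinj : Function.Injective (Subtype.val : Zstar → ℤ × ℤ) := Subtype.val_injective
  rw [← hinj.hasSum_iff]
  · convert hs.hasSum using 2 with k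
    simp [zext, k.2]
  · intro x hx
    have : x = 0 := by
      by_contra h
      exact hx ⟨⟨x, h⟩, rfl⟩
    simp [zext, this]

lemma hasSum_zext_sq_sub {ω : Zstar → ℂ} (hs : Summable fun k => ‖ω k‖ ^ 2) (k : ℤ × ℤ) :
    HasSum (fun ℓ => ‖zext ω (k - ℓ)‖ ^ 2) (∑' k, ‖ω k‖ ^ 2) :=
  ((Equiv.subLeft k).hasSum_iff (f := fun ℓ => ‖zext ω ℓ‖ ^ 2)).2 (hasSum_zext_sq hs)

lemma norm_Fterm_le (ω : Zstar → ℂ) (k : Zstar) (ℓ : ℤ × ℤ) :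
    ‖Fterm ω k ℓ‖ ≤ znorm k.1 * (‖zext ω ℓ‖ * ‖zext ω (k.1 - ℓ)‖ / znorm ℓ) := by
  rw [Fterm, norm_mul, norm_mul, Complex.norm_real, Real.norm_eq_abs, abs_div,
    abs_of_nonneg (sq_nonneg (znorm ℓ))]
  rcases eq_or_ne ℓ 0 with rfl | hℓ
  · simp [zext]
  have h1 := one_le_znorm hℓ
  have h : |(zdot (zperp ℓ) k.1 : ℝ)| / znorm ℓ ^ 2 ≤ znorm k.1 / znorm ℓ := by
    rw [div_le_div_iff₀ (by positivity) (by positivity)]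
    have := mul_le_mul_of_nonneg_right (abs_zdot_zperp_le ℓ k.1) (znorm_nonneg ℓ)
    nlinarith
  calc _ ≤ znorm k.1 / znorm ℓ * ‖zext ω ℓ‖ * ‖zext ω (k.1 - ℓ)‖ := by gcongr
    _ = _ := by ring

lemma norm_Fns_le {ω : Zstar → ℂ} {k : Zstar} {g : ℤ × ℤ → ℝ} {a : ℝ} (hg : HasSum g a)
    (h : ∀ ℓ, ‖Fterm ω k ℓ‖ ≤ g ℓ) : ‖Fns ω k‖ ≤ 2 * a := by
  have := tsum_of_norm_bounded hg h
  rw [Fns, norm_mul, norm_mul, Complex.norm_I, Complex.norm_ofNat]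
  linarith

/-- The bound on `F` that uses only the energy: `|F_k| ≤ 2 |k| B²`. -/
lemma norm_Fns_le_energy {ω : Zstar → ℂ} {B : ℝ} (hs : Summable fun k => ‖ω k‖ ^ 2)
    (hB : ∑' k, ‖ω k‖ ^ 2 ≤ B ^ 2) (k : Zstar) : ‖Fns ω k‖ ≤ 2 * B ^ 2 * znorm k.1 := by
  have hg := (((hasSum_zext_sq hs).add (hasSum_zext_sq_sub hs k.1)).div_const 2).mul_left
    (znorm k.1)
  refine (norm_Fns_le hg fun ℓ => (norm_Fterm_le ω k ℓ).trans ?_).trans ?_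
  · refine mul_le_mul_of_nonneg_left ?_ (znorm_nonneg _)
    rcases eq_or_ne ℓ 0 with rfl | hℓ
    · have : zext ω 0 = 0 := by simp [zext]
      rw [this]
      simp
      positivity
    · refine (div_le_self (by positivity) (one_le_znorm hℓ)).trans ?_
      nlinarith [sq_nonneg (‖zext ω ℓ‖ - ‖zext ω (k.1 - ℓ)‖)]
  · have := mul_le_mul_of_nonneg_left hB (znorm_nonneg k.1)
    nlinarith

/-- Decay passes to `F` up to the loss of `1 + η` powers: one of `ℓ`, `k - ℓ` has norm at least
`|k| / 2`, so the decay of that factor can be pulled out as a power of `|k|`, while the other factor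
is summed in `ℓ²` against `|ℓ|^{-1-η}`. -/
lemma norm_Fns_le_decay {ω : Zstar → ℂ} {B M γ η : ℝ} (hη : 0 < η) (hγ : η ≤ γ) (hM : 0 ≤ M)
    (h : ∀ k : Zstar, znorm k.1 ^ γ * ‖ω k‖ ≤ M)
    (hs : Summable fun k => ‖ω k‖ ^ 2) (hB : ∑' k, ‖ω k‖ ^ 2 ≤ B ^ 2) (k : Zstar) :
    ‖Fns ω k‖ ≤ 2 * 2 ^ γ * ((∑' ℓ : ℤ × ℤ, (znorm ℓ ^ (-1 - η)) ^ 2) + B ^ 2) * M *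
      znorm k.1 ^ (1 + η - γ) := by
  have hk := one_le_znorm k.2
  have hk0 : 0 < znorm k.1 := by linarith
  -- applied to whichever of `ℓ`, `k - ℓ` has norm at least `|k| / 2`
  have hdec : ∀ j : ℤ × ℤ, znorm k.1 / 2 ≤ znorm j →
      ‖zext ω j‖ ≤ M * znorm j ^ (-γ) := by
    intro j hj
    have hj0 : 0 < znorm j := by linarith
    have hne : j ≠ 0 := by
      rintro rfl
      simp [znorm] at hj0
    have := h ⟨j, hne⟩
    simp only [zext, ne_eq, hne, not_false_eq_true, dif_pos]
    rw [Real.rpow_neg hj0.le, ← div_eq_mul_inv, le_div_iff₀ (by positivity), mul_comm]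
    exact this
  have hhalf : ∀ p : ℝ, -γ ≤ p → p ≤ 0 → ∀ x : ℝ, znorm k.1 / 2 ≤ x →
      x ^ p ≤ 2 ^ γ * znorm k.1 ^ p := by
    intro p hp hp0 x hx
    calc x ^ p ≤ (znorm k.1 / 2) ^ p := Real.rpow_le_rpow_of_nonpos (by positivity) hx hp0
      _ = 2 ^ (-p) * znorm k.1 ^ p := by
        rw [Real.div_rpow hk0.le (by norm_num), Real.rpow_neg (by norm_num)]
        field_simp
      _ ≤ 2 ^ γ * znorm k.1 ^ p := by
        gcongr
        · norm_num
        · linarith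
  have hg := ((summable_znorm hη).hasSum.add
    (((hasSum_zext_sq hs).add (hasSum_zext_sq_sub hs k.1)).div_const 2)).mul_left
    (2 ^ γ * M * znorm k.1 ^ (1 + η - γ))
  refine (norm_Fns_le hg fun ℓ => (norm_Fterm_le ω k ℓ).trans ?_).trans ?_
  · set a := ‖zext ω ℓ‖ with ha
    set b := ‖zext ω (k.1 - ℓ)‖ with hb
    have ha0 : 0 ≤ a := norm_nonneg _
    have hb0 : 0 ≤ b := norm_nonneg _
    rcases eq_or_ne ℓ 0 with rfl | hℓ
    · have : a = 0 := by simp [ha, zext]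
      rw [this]
      simp only [zero_mul, zero_div, mul_zero]
      positivity
    have hℓ1 := one_le_znorm hℓ
    have hℓ0 : 0 < znorm ℓ := by linarith
    set w := znorm ℓ ^ (-1 - η) with hw
    have hw0 : 0 ≤ w := by positivity
    have hpow : znorm k.1 ^ (1 + η - γ) = znorm k.1 * znorm k.1 ^ (η - γ) := by
      rw [show 1 + η - γ = 1 + (η - γ) by ring, Real.rpow_add hk0, Real.rpow_one]
    have key : a * b / znorm ℓ ≤ 2 ^ γ * M * znorm k.1 ^ (η - γ) * (w * (a + b)) := by
      rcases le_total (znorm ℓ) (znorm k.1 / 2) with hle | hle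
      · have hkl : znorm k.1 / 2 ≤ znorm (k.1 - ℓ) := by
          have := znorm_triangle k.1 ℓ
          linarith
        have h1 : b ≤ M * (2 ^ γ * znorm k.1 ^ (-γ)) :=
          (hdec _ hkl).trans (mul_le_mul_of_nonneg_left
            (hhalf (-γ) le_rfl (by linarith) _ hkl) hM)
        have h2 : (znorm ℓ)⁻¹ ≤ w * znorm k.1 ^ η := by
          have : (znorm ℓ)⁻¹ = w * znorm ℓ ^ η := by
            rw [hw, ← Real.rpow_add hℓ0, ← Real.rpow_neg_one]
            congr 1; ring
          rw [this]
          gcongr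
          linarith
        calc a * b / znorm ℓ = a * b * (znorm ℓ)⁻¹ := div_eq_mul_inv _ _
          _ ≤ a * (M * (2 ^ γ * znorm k.1 ^ (-γ))) * (w * znorm k.1 ^ η) := by gcongr
          _ = 2 ^ γ * M * (znorm k.1 ^ η * znorm k.1 ^ (-γ)) * (w * a) := by ring
          _ = 2 ^ γ * M * znorm k.1 ^ (η - γ) * (w * a) := by
            rw [← Real.rpow_add hk0, ← sub_eq_add_neg]
          _ ≤ _ := by gcongr; linarith
      · have h1 : a * (znorm ℓ)⁻¹ ≤ M * (w * (2 ^ γ * znorm k.1 ^ (η - γ))) := by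
          calc a * (znorm ℓ)⁻¹ ≤ M * znorm ℓ ^ (-γ) * (znorm ℓ)⁻¹ := by
                gcongr
                exact hdec _ hle
            _ = M * (w * znorm ℓ ^ (η - γ)) := by
              rw [hw, ← Real.rpow_add hℓ0, ← Real.rpow_neg_one, mul_assoc, ← Real.rpow_add hℓ0]
              congr 2; ring
            _ ≤ _ := by
              gcongr
              exact hhalf _ (by linarith) (by linarith) _ hle
        calc a * b / znorm ℓ = (a * (znorm ℓ)⁻¹) * b := by ring
          _ ≤ M * (w * (2 ^ γ * znorm k.1 ^ (η - γ))) * b := by gcongr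
          _ = 2 ^ γ * M * znorm k.1 ^ (η - γ) * (w * b) := by ring
          _ ≤ _ := by gcongr; linarith
    rw [hpow]
    calc znorm k.1 * (a * b / znorm ℓ)
        ≤ znorm k.1 * (2 ^ γ * M * znorm k.1 ^ (η - γ) * (w * (a + b))) := by gcongr
      _ ≤ znorm k.1 * (2 ^ γ * M * znorm k.1 ^ (η - γ) * (w ^ 2 + (a ^ 2 + b ^ 2) / 2)) := by
        gcongr
        nlinarith [sq_nonneg (w - a), sq_nonneg (w - b)]
      _ = _ := by ring
  · have : 0 ≤ 2 ^ γ * M * znorm k.1 ^ (1 + η - γ) := by positivity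
    have := mul_le_mul_of_nonneg_left hB this
    nlinarith

/-! ### The scalar equation and the bootstrap -/

/-- Duhamel bound for `ρ' = -Λ ρ + f`, `ρ(0) = 0`, `|f| ≤ A`. -/
lemma duhamel_bound {Λ A t : ℝ} (hΛ : 0 < Λ) {ρ f : ℝ → ℂ} (h0 : ρ 0 = 0)
    (hd : ∀ s ∈ Set.Icc 0 t, HasDerivWithinAt ρ (-(Λ : ℂ) * ρ s + f s) (Set.Icc 0 t) s)
    (hf : ∀ s ∈ Set.Icc 0 t, ‖f s‖ ≤ A) : ∀ s ∈ Set.Icc 0 t, ‖ρ s‖ ≤ A / Λ := by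
  intro s hs
  have hA : 0 ≤ A := (norm_nonneg _).trans (hf s hs)
  have hexp : ∀ x : ℝ, HasDerivAt (fun u : ℝ => Real.exp (Λ * u)) (Real.exp (Λ * x) * Λ) x := by
    intro x
    have := ((hasDerivAt_id x).const_mul Λ).exp
    simpa using this
  have hG : ∀ x ∈ Set.Icc 0 t, HasDerivWithinAt (fun u => ((Real.exp (Λ * u) : ℝ) : ℂ) * ρ u)
      (((Real.exp (Λ * x) : ℝ) : ℂ) * f x) (Set.Icc 0 t) x := by
    intro x hx
    have := ((hexp x).ofReal_comp.hasDerivWithinAt (s := Set.Icc 0 t)).mul (hd x hx)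
    refine this.congr_deriv ?_
    push_cast
    ring
  have hcomp := image_norm_le_of_norm_deriv_right_le_deriv_boundary' (a := 0) (b := t)
    (f := fun u => ((Real.exp (Λ * u) : ℝ) : ℂ) * ρ u)
    (f' := fun x => ((Real.exp (Λ * x) : ℝ) : ℂ) * f x)
    (B := fun u => A / Λ * (Real.exp (Λ * u) - 1)) (B' := fun x => A * Real.exp (Λ * x))
    (fun x hx => (hG x hx).continuousWithinAt)
    (fun x hx => (hG x (Set.Ico_subset_Icc_self hx)).mono_of_mem_nhdsWithin
      (Icc_mem_nhdsGE_of_mem hx))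
    (by simp [h0])
    (by fun_prop)
    (fun x _ => by
      refine ((((hexp x).sub_const 1).const_mul (A / Λ)).congr_deriv ?_).hasDerivWithinAt
      field_simp)
    (fun x hx => by
      rw [norm_mul, Complex.norm_real, Real.norm_eq_abs, abs_of_pos (Real.exp_pos _), mul_comm]
      exact mul_le_mul_of_nonneg_right (hf x (Set.Ico_subset_Icc_self hx)) (Real.exp_pos _).le)
    hs
  simp only [norm_mul, Complex.norm_real, Real.norm_eq_abs, abs_of_pos (Real.exp_pos _)] at hcomp
  have hE := Real.exp_pos (Λ * s)
  have hAΛ : 0 ≤ A / Λ := by positivity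
  have : Real.exp (Λ * s) * ‖ρ s‖ ≤ Real.exp (Λ * s) * (A / Λ) := by nlinarith
  exact le_of_mul_le_mul_left this hE

lemma norm_le_of_energy {ω : Zstar → ℂ} {B : ℝ} (hB0 : 0 ≤ B) (hs : Summable fun k => ‖ω k‖ ^ 2)
    (hB : ∑' k, ‖ω k‖ ^ 2 ≤ B ^ 2) (k : Zstar) : ‖ω k‖ ≤ B := by
  have := hs.le_tsum k (fun j _ => sq_nonneg _)
  exact abs_le_of_sq_le_sq' (this.trans hB) hB0 |>.2

/-- Gluing the decay of `z` and of `ρ = ω - z`. -/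
lemma decay_add {x p γ D M : ℝ} {a b : ℂ} (hx : 1 ≤ x) (hp : p ≤ γ)
    (hz : x ^ γ * ‖b‖ ≤ D) (hρ : ‖a - b‖ ≤ M * x ^ (-p)) : x ^ p * ‖a‖ ≤ D + M := by
  have hx0 : 0 < x := by linarith
  have h1 : x ^ p * ‖b‖ ≤ D := le_trans (by gcongr) hz
  have h2 : x ^ p * ‖a - b‖ ≤ M := by
    calc x ^ p * ‖a - b‖ ≤ x ^ p * (M * x ^ (-p)) := by gcongr
      _ = M * (x ^ p * x ^ (-p)) := by ring
      _ = M := by rw [← Real.rpow_add hx0]; simp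
  have h3 : ‖a‖ ≤ ‖b‖ + ‖a - b‖ := by
    have := norm_add_le b (a - b)
    simpa using this
  have : x ^ p * ‖a‖ ≤ x ^ p * (‖b‖ + ‖a - b‖) := by gcongr
  nlinarith

/-! ### The trapping estimate -/

/-- trapping estimate for `ρ = ω − z` (Proposition 1 of the paper). -/
theorem stmt7 :
    ∀ ν γ α α' : ℝ, 0 < ν → 0 < γ → α' ≤ α → 1 < α' →
    ∀ D B : ℝ, 0 < D → 0 < B →
    ∃ (K₀ : ℕ) (Dbar : ℝ), 2 * D ≤ Dbar ∧
      ∀ t : ℝ, 0 < t →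
      ∀ ω z : Zstar → ℝ → ℂ,
        (∀ k : Zstar, ContinuousOn (ω k) (Set.Icc 0 t)) →
        (∀ k : Zstar, ContinuousOn (z k) (Set.Icc 0 t)) →
        -- (i) `|z(s)|_{∞,γ} ≤ D` on `[0,t]`
        (∀ (k : Zstar), ∀ s ∈ Set.Icc 0 t, znorm k.1 ^ γ * ‖z k s‖ ≤ D) →
        -- (ii) `‖ω(s)‖² ≤ B²` on `[0,t]`
        (∀ s ∈ Set.Icc 0 t,
          (Summable fun k : Zstar => ‖ω k s‖ ^ 2) ∧ (∑' k : Zstar, ‖ω k s‖ ^ 2) ≤ B ^ 2) →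
        -- (iii) `ρ_k(0) = 0` and `ρ_k' = −ν|k|^α ρ_k + F_k(ω)`, `F` absolutely convergent
        (∀ k : Zstar, ω k 0 = z k 0) →
        (∀ (k : Zstar), ∀ s ∈ Set.Icc 0 t,
          (Summable fun ℓ : ℤ × ℤ => ‖Fterm (fun j => ω j s) k ℓ‖) ∧
          HasDerivWithinAt (fun u => ω k u - z k u)
            (-((ν * znorm k.1 ^ α : ℝ) : ℂ) * (ω k s - z k s) + Fns (fun j => ω j s) k)
            (Set.Icc 0 t) s) →
        ∀ k : Zstar, (K₀ : ℝ) < znorm k.1 →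
          (∀ s ∈ Set.Icc 0 t,
            ‖ω k s - z k s‖ ≤ 2 * Dbar / znorm k.1 ^ (γ + (α - α'))) ∧
          (∀ s ∈ Set.Icc 0 t, znorm k.1 ^ γ * ‖ω k s‖ ≤ 3 * Dbar) := by
  intro ν γ α α' hν hγ hα hα' D B hD hB
  obtain ⟨η, hη, hηγ, hηα⟩ : ∃ η : ℝ, 0 < η ∧ η ≤ γ ∧ 2 * η ≤ α' - 1 := by
    refine ⟨min γ ((α' - 1) / 2), lt_min hγ (by linarith), min_le_left _ _, ?_⟩
    have := min_le_right γ ((α' - 1) / 2)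
    linarith
  set C : ℝ → ℝ := fun p =>
    2 * 2 ^ p * ((∑' ℓ : ℤ × ℤ, (znorm ℓ ^ (-1 - η)) ^ 2) + B ^ 2) with hC
  have hC0 : ∀ p, 0 ≤ C p := by
    intro p
    have : 0 ≤ ∑' ℓ : ℤ × ℤ, (znorm ℓ ^ (-1 - η)) ^ 2 := tsum_nonneg fun _ => sq_nonneg _
    simp only [hC]
    positivity
  -- beyond `K₀` the gain `|k|^{-η}` absorbs the constant of the nonlinear estimate
  obtain ⟨K₀, hK₀⟩ : ∃ K₀ : ℕ, ∀ x : ℝ, (K₀ : ℝ) < x → C γ / ν * x ^ (-η) ≤ 1 / 4 := by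
    have h1 : Filter.Tendsto (fun x : ℝ => C γ / ν * x ^ (-η)) Filter.atTop (nhds 0) := by
      simpa using (tendsto_rpow_neg_atTop hη).const_mul (C γ / ν)
    have h2 := h1.eventually_le_const (show (0 : ℝ) < 1 / 4 by norm_num)
    obtain ⟨a, ha⟩ := Filter.eventually_atTop.1 h2
    obtain ⟨n, hn⟩ := exists_nat_ge a
    exact ⟨n, fun x hx => ha x (hn.trans hx.le)⟩
  refine ⟨K₀, max (2 * D) ((K₀ : ℝ) ^ γ * B), le_max_left _ _, ?_⟩
  set E := max (2 * D) ((K₀ : ℝ) ^ γ * B) with hE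
  have hE1 : 2 * D ≤ E := le_max_left _ _
  have hE2 : (K₀ : ℝ) ^ γ * B ≤ E := le_max_right _ _
  intro t ht ω z _ _ hz hen h0 hode
  have hρ : ∀ (k : Zstar) (A : ℝ), (∀ s ∈ Set.Icc 0 t, ‖Fns (fun j => ω j s) k‖ ≤ A) →
      ∀ s ∈ Set.Icc 0 t, ‖ω k s - z k s‖ ≤ A / (ν * znorm k.1 ^ α) := by
    intro k A hA
    have hk := one_le_znorm k.2
    exact duhamel_bound (ρ := fun u => ω k u - z k u) (f := fun s => Fns (fun j => ω j s) k)
      (by positivity) (by simp [h0 k]) (fun s hs => (hode k s hs).2) hA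
  -- decay of exponent `p` gives, for `ρ`, decay of exponent `p + α - 1 - η`
  have hstep : ∀ p M : ℝ, η ≤ p → 0 ≤ M →
      (∀ k : Zstar, ∀ s ∈ Set.Icc 0 t, znorm k.1 ^ p * ‖ω k s‖ ≤ M) →
      ∀ k : Zstar, ∀ s ∈ Set.Icc 0 t,
        ‖ω k s - z k s‖ ≤ C p / ν * M * znorm k.1 ^ (1 + η - p - α) := by
    intro p M hp hM h k s hs
    have hk := one_le_znorm k.2
    have hk0 : 0 < znorm k.1 := by linarith
    refine (hρ k _ (fun s hs => norm_Fns_le_decay hη hp hM (fun k => h k s hs)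
      (hen s hs).1 (hen s hs).2 k) s hs).trans (le_of_eq ?_)
    rw [Real.rpow_sub hk0 _ α]
    simp only [hC]
    field_simp
  have hboot : ∀ n : ℕ, ∃ M : ℝ, 0 ≤ M ∧ ∀ k : Zstar, ∀ s ∈ Set.Icc 0 t,
      znorm k.1 ^ (min γ ((n + 1) * η)) * ‖ω k s‖ ≤ M := by
    intro n
    induction n with
    | zero =>
      refine ⟨D + 2 * B ^ 2 / ν, by positivity, fun k s hs => ?_⟩
      have hk := one_le_znorm k.2
      have hk0 : 0 < znorm k.1 := by linarith
      refine decay_add hk (min_le_left _ _) (hz k s hs) ?_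
      refine (hρ k _ (fun s hs => norm_Fns_le_energy (hen s hs).1 (hen s hs).2 k) s hs).trans ?_
      calc 2 * B ^ 2 * znorm k.1 / (ν * znorm k.1 ^ α)
          = 2 * B ^ 2 / ν * znorm k.1 ^ (1 - α) := by
            rw [Real.rpow_sub hk0, Real.rpow_one]
            field_simp
        _ ≤ _ := by
          gcongr
          have := min_le_right γ (((0 : ℕ) + 1) * η)
          push_cast at this ⊢
          linarith
    | succ n ih =>
      obtain ⟨M, hM, h⟩ := ih
      set p := min γ ((n + 1) * η) with hp
      have hηp : η ≤ p := le_min hηγ (by nlinarith [(n.cast_nonneg : (0 : ℝ) ≤ n)])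
      have hCp := hC0 p
      refine ⟨D + C p / ν * M, by positivity, fun k s hs => ?_⟩
      have hk := one_le_znorm k.2
      refine decay_add hk (min_le_left _ _) (hz k s hs) ?_
      refine (hstep p M hηp hM h k s hs).trans ?_
      gcongr
      have h1 : min γ (((n + 1 : ℕ) + 1) * η) ≤ p + η := by
        rw [hp, ← min_add_add_right]
        refine min_le_min (by linarith) (le_of_eq ?_)
        push_cast
        ring
      linarith
  -- finiteness of the weighted supremum, with no control on its size
  obtain ⟨M₁, hM₁, hfin⟩ : ∃ M : ℝ, 0 ≤ M ∧ ∀ k : Zstar, ∀ s ∈ Set.Icc 0 t,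
      znorm k.1 ^ γ * ‖ω k s‖ ≤ M := by
    obtain ⟨n, hn⟩ := exists_nat_ge (γ / η)
    obtain ⟨M, hM, h⟩ := hboot n
    have : γ ≤ (n + 1) * η := by
      rw [div_le_iff₀ hη] at hn
      linarith
    rw [min_eq_left this] at h
    exact ⟨M, hM, h⟩
  have hhigh : ∀ M : ℝ, 0 ≤ M →
      (∀ k : Zstar, ∀ s ∈ Set.Icc 0 t, znorm k.1 ^ γ * ‖ω k s‖ ≤ M) →
      ∀ k : Zstar, (K₀ : ℝ) < znorm k.1 → ∀ s ∈ Set.Icc 0 t,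
        ‖ω k s - z k s‖ ≤ M / 4 * znorm k.1 ^ (-(γ + (α - α'))) := by
    intro M hM h k hkK s hs
    have hk := one_le_znorm k.2
    have hk0 : 0 < znorm k.1 := by linarith
    have hCγ := hC0 γ
    calc ‖ω k s - z k s‖ ≤ C γ / ν * M * znorm k.1 ^ (1 + η - γ - α) := hstep γ M hηγ hM h k s hs
      _ ≤ C γ / ν * M * znorm k.1 ^ (-η + -(γ + (α - α'))) := by
        gcongr
        linarith
      _ = C γ / ν * znorm k.1 ^ (-η) * (M * znorm k.1 ^ (-(γ + (α - α')))) := by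
        rw [Real.rpow_add hk0]
        ring
      _ ≤ 1 / 4 * (M * znorm k.1 ^ (-(γ + (α - α')))) := by
        gcongr
        exact hK₀ _ hkK
      _ = _ := by ring
  have himp : ∀ M : ℝ, 0 ≤ M →
      (∀ k : Zstar, ∀ s ∈ Set.Icc 0 t, znorm k.1 ^ γ * ‖ω k s‖ ≤ M) →
      ∀ k : Zstar, ∀ s ∈ Set.Icc 0 t, znorm k.1 ^ γ * ‖ω k s‖ ≤ max (D + M / 4) E := by
    intro M hM h k s hs
    have hk := one_le_znorm k.2
    rcases le_or_gt (znorm k.1) K₀ with hle | hgt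
    · refine le_max_of_le_right (le_trans ?_ hE2)
      have := norm_le_of_energy hB.le (hen s hs).1 (hen s hs).2 k
      gcongr
    · refine le_max_of_le_left (decay_add hk le_rfl (hz k s hs) ?_)
      refine (hhigh M hM h k hgt s hs).trans ?_
      gcongr
      linarith
  have hmain : ∀ k : Zstar, ∀ s ∈ Set.Icc 0 t, znorm k.1 ^ γ * ‖ω k s‖ ≤ E := by
    let S : Set ℝ := {x | ∃ k : Zstar, ∃ s ∈ Set.Icc 0 t, x = znorm k.1 ^ γ * ‖ω k s‖}
    have hbdd : BddAbove S := ⟨M₁, by rintro _ ⟨k, s, hs, rfl⟩; exact hfin k s hs⟩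
    have hmem : ∀ k : Zstar, ∀ s ∈ Set.Icc 0 t, znorm k.1 ^ γ * ‖ω k s‖ ≤ sSup S :=
      fun k s hs => le_csSup hbdd ⟨k, s, hs, rfl⟩
    intro k s hs
    have hnonneg : 0 ≤ sSup S := le_trans
      (mul_nonneg (Real.rpow_nonneg (znorm_nonneg _) _) (norm_nonneg _)) (hmem k s hs)
    have hle : sSup S ≤ max (D + sSup S / 4) E := by
      refine csSup_le ⟨_, k, s, hs, rfl⟩ ?_
      rintro _ ⟨k, s, hs, rfl⟩
      exact himp _ hnonneg hmem k s hs
    refine (hmem k s hs).trans ?_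
    rcases le_max_iff.1 hle with h | h <;> linarith
  have hE0 : 0 ≤ E := by linarith
  intro k hkK
  have hk0 : 0 < znorm k.1 := by
    have := one_le_znorm k.2
    linarith
  refine ⟨fun s hs => ?_, fun s hs => (hmain k s hs).trans (by linarith)⟩
  refine (hhigh E hE0 hmain k hkK s hs).trans ?_
  rw [div_eq_mul_inv (2 * E), ← Real.rpow_neg hk0.le]
  gcongr
  linarith
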